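/- Let p be a prime, K a field of characteristic p, n ≥ 1 an integer, and W a finite-dimensional K-vector space. Suppose that for each integer ℓ with 0 ≤ ℓ ≤ n(p−1) we are given a K-subspace F_ℓ ⊆ W ⊗_K R^ℓ such that for all 1 ≤ ℓ ≤ n(p−1) and all 1 ≤ i ≤ n the map id_W ⊗ ∂/∂x_i sends F_ℓ into F_{ℓ−1}. Then ∑_{ℓ=0}^{n(p−1)} dim_K F_ℓ ≥ p^n · dim_K F_{n(p−1)}. -/

import Mathlib

open MvPolynomial TensorProduct

/-- `R^ℓ`: the `K`-span of monomials `x₁^{k₁} ⋯ xₙ^{kₙ}` with `∑ kᵢ = ℓ` and `0 ≤ kᵢ ≤ p-1`. -/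
noncomputable def Rsub (K : Type*) [Field K] (p n ℓ : ℕ) :
    Submodule K (MvPolynomial (Fin n) K) :=
  Submodule.span K { q | ∃ k : Fin n →₀ ℕ, (∀ i, k i ≤ p - 1) ∧ (∑ i, k i) = ℓ ∧
    q = monomial k 1 }

/-- `W ⊗_K R^ℓ` viewed as a subspace of `W ⊗_K K[x₁,…,xₙ]`. -/
noncomputable def WR (K W : Type*) [Field K] [AddCommGroup W] [Module K W] (p n ℓ : ℕ) :
    Submodule K (W ⊗[K] MvPolynomial (Fin n) K) :=
  LinearMap.range (LinearMap.lTensor W (Rsub K p n ℓ).subtype)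

/-!
Write `x^d = (x₁⋯xₙ)^(p-1)` for the only monomial of `R^{n(p-1)}`. A basis of the top piece has the
form `wⱼ ⊗ x^d` with the `wⱼ` linearly independent in `W`. Differentiating repeatedly takes
`wⱼ ⊗ x^d` to a multiple of `wⱼ ⊗ x^k` for each `k ≤ d`, and the scalar divides `∏ (dᵢ)!`, which is
invertible in characteristic `p`. So the elements `wⱼ ⊗ x^k` with `|k| = ℓ` lie in `F_ℓ`; they are
linearly independent, and altogether there are `pⁿ` exponents `k ≤ d` for each `j`.
-/

open scoped Nat

section TensorMonomial

variable {σ R M : Type*} [CommSemiring R] [AddCommMonoid M] [Module R M]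

theorem lTensor_pderiv_tmul_monomial (i : σ) (m : M) (k : σ →₀ ℕ) :
    LinearMap.lTensor M (pderiv i).toLinearMap
        (m ⊗ₜ[R] monomial (k + Finsupp.single i 1) (1 : R)) =
      ((k i + 1 : ℕ) : R) • m ⊗ₜ[R] monomial k (1 : R) := by
  have hderiv : pderiv i (monomial (k + Finsupp.single i 1) (1 : R)) =
      ((k i + 1 : ℕ) : R) • monomial k (1 : R) := by
    simp [pderiv_monomial, smul_monomial]
  rw [LinearMap.lTensor_tmul, Derivation.coeFn_coe, hderiv, tmul_smul]

variable {d : σ →₀ ℕ} {F : ℕ → Submodule R (M ⊗[R] MvPolynomial σ R)}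

theorem tmul_monomial_mem_of_add_single (hd : ∀ i, IsUnit ((d i)! : R))
    (hF : ∀ ℓ < d.degree, ∀ i,
      (F (ℓ + 1)).map (LinearMap.lTensor M (pderiv i).toLinearMap) ≤ F ℓ)
    {m : M} {k : σ →₀ ℕ} {i : σ} (hk : k + Finsupp.single i 1 ≤ d)
    (hm : m ⊗ₜ[R] monomial (k + Finsupp.single i 1) (1 : R) ∈
      F (k + Finsupp.single i 1).degree) :
    m ⊗ₜ[R] monomial k (1 : R) ∈ F k.degree := by
  have hdegree : (k + Finsupp.single i 1).degree = k.degree + 1 := by simp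
  have hlt : k.degree < d.degree := by
    simpa only [hdegree, Nat.add_one_le_iff] using Finsupp.degree_mono hk
  have hki : k i + 1 ≤ d i := by simpa using hk i
  have hunit : IsUnit ((k i + 1 : ℕ) : R) :=
    isUnit_of_dvd_unit (Nat.cast_dvd_cast (Nat.dvd_factorial (k i).succ_pos hki)) (hd i)
  rw [hdegree] at hm
  have hderiv := hF _ hlt i (Submodule.mem_map_of_mem hm)
  rwa [lTensor_pderiv_tmul_monomial, Submodule.smul_mem_iff_of_isUnit _ hunit] at hderiv

theorem tmul_monomial_mem_of_le (hd : ∀ i, IsUnit ((d i)! : R))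
    (hF : ∀ ℓ < d.degree, ∀ i,
      (F (ℓ + 1)).map (LinearMap.lTensor M (pderiv i).toLinearMap) ≤ F ℓ)
    {m : M} (hm : m ⊗ₜ[R] monomial d (1 : R) ∈ F d.degree) {k : σ →₀ ℕ} (hk : k ≤ d) :
    m ⊗ₜ[R] monomial k (1 : R) ∈ F k.degree := by
  have hdescend (c : σ →₀ ℕ) : ∀ k, k + c ≤ d →
      m ⊗ₜ[R] monomial (k + c) (1 : R) ∈ F (k + c).degree →
        m ⊗ₜ[R] monomial k (1 : R) ∈ F k.degree := by
    induction c using Finsupp.induction_linear with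
    | zero => simp
    | add c₁ c₂ ih₁ ih₂ =>
      intro k hle hmem
      rw [← add_assoc] at hle hmem
      exact ih₁ k (le_self_add.trans hle) (ih₂ (k + c₁) hle hmem)
    | single i a =>
      induction a with
      | zero => simp
      | succ a ih =>
        intro k hle hmem
        rw [Finsupp.single_add, ← add_assoc] at hle hmem
        exact ih k (le_self_add.trans hle) (tmul_monomial_mem_of_add_single hd hF hle hmem)
  obtain ⟨c, rfl⟩ := exists_add_of_le hk
  exact hdescend c k le_rfl hm

end TensorMonomial

section TensorProduct

theorem range_lTensor_subtype_span_singleton {R N : Type*} (M : Type*) [CommSemiring R]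
    [AddCommMonoid M] [AddCommMonoid N] [Module R M] [Module R N] (x : N) :
    LinearMap.range (LinearMap.lTensor M (Submodule.span R {x}).subtype) =
      LinearMap.range ((TensorProduct.mk R M N).flip x) := by
  rw [LinearMap.lTensor, TensorProduct.range_map, Submodule.range_subtype, LinearMap.range_id,
    Submodule.map₂_span_singleton_eq_map_flip, Submodule.map_top]

universe u v w

theorem card_mul_mk_le_rank_of_tmul_mem {R : Type*} {M : Type u} {N : Type v} {κ : Type w}
    {ι : Type (max u v)} [CommSemiring R] [Nontrivial R] [AddCommMonoid M] [AddCommMonoid N]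
    [Module R M] [Module R N] [Module.Flat R M] {b : ι → M} {c : κ → N}
    (hb : LinearIndependent R b) (hc : LinearIndependent R c) (s : Finset κ)
    {G : Submodule R (M ⊗[R] N)} (hG : ∀ j, ∀ k ∈ s, b j ⊗ₜ[R] c k ∈ G) :
    s.card * Cardinal.mk ι ≤ Module.rank R G := by
  let f : Fin s.card × ι → G := fun q ↦
    ⟨b q.2 ⊗ₜ c (s.equivFin.symm q.1), hG _ _ (s.equivFin.symm q.1).2⟩
  have hf : LinearIndependent R f := by
    have hindex : Function.Injective
        fun q : Fin s.card × ι ↦ (q.2, (s.equivFin.symm q.1 : κ)) := by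
      rintro ⟨a, j⟩ ⟨a', j'⟩ h
      simpa [Subtype.coe_inj, and_comm] using h
    have htmul := (hb.tmul_of_flat_left hc).comp _ hindex
    exact LinearIndependent.of_comp G.subtype htmul
  simpa using hf.cardinal_le_rank

end TensorProduct

theorem prod_add_one_eq_sum_card_degree {σ : Type*} [DecidableEq σ] (d : σ →₀ ℕ) :
    d.prod (fun _ a ↦ a + 1) =
      ∑ ℓ ∈ Finset.range (d.degree + 1), {k ∈ Finset.Iic d | k.degree = ℓ}.card := by
  rw [← Finset.card_eq_sum_card_fiberwise, Finsupp.card_Iic]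
  · simp [Finsupp.prod]
  · intro k hk
    simpa [Nat.lt_succ_iff] using Finsupp.degree_mono (Finset.mem_Iic.1 hk)

theorem natCast_mul_rank_le_sum_rank_iff {K V ι : Type*} [Field K] [AddCommGroup V] [Module K V]
    {F : ι → Submodule K V} {s : Finset ι} (hF : ∀ i ∈ s, FiniteDimensional K (F i)) {i : ι}
    (hi : i ∈ s) (a : ℕ) :
    a * Module.rank K (F i) ≤ ∑ j ∈ s, Module.rank K (F j) ↔
      a * Module.finrank K (F i) ≤ ∑ j ∈ s, Module.finrank K (F j) := by
  have hcast : ∀ j ∈ s, (Module.finrank K (F j) : Cardinal) = Module.rank K (F j) := fun j hj ↦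
    have := hF j hj
    Module.finrank_eq_rank K (F j)
  rw [← hcast i hi, ← Finset.sum_congr rfl hcast]
  norm_cast

section TruncatedPolynomials

/-- The exponent `(p - 1, …, p - 1)` of the only monomial in the top piece `R^{n(p-1)}`. -/
noncomputable def topExponent (p n : ℕ) : Fin n →₀ ℕ :=
  Finsupp.equivFunOnFinite.symm fun _ ↦ p - 1

@[simp]
theorem topExponent_apply (p n : ℕ) (i : Fin n) : topExponent p n i = p - 1 := rfl

@[simp]
theorem degree_topExponent (p n : ℕ) : (topExponent p n).degree = n * (p - 1) := by
  simp [Finsupp.degree_eq_sum]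

theorem prod_topExponent_add_one {p : ℕ} (hp : 0 < p) (n : ℕ) :
    (topExponent p n).prod (fun _ a ↦ a + 1) = p ^ n := by
  simp [Finsupp.prod_fintype, Nat.sub_add_cancel hp]

variable (K : Type*) [Field K]

theorem topExponent_factorial_ne_zero {p : ℕ} (hp : p.Prime) [CharP K p] {n : ℕ} (i : Fin n) :
    ((topExponent p n i)! : K) ≠ 0 :=
  have : Fact p.Prime := ⟨hp⟩
  ((IsUnit.natCast_factorial_iff_of_charP p).2 (Nat.pred_lt hp.ne_zero)).ne_zero

theorem Rsub_top (p n : ℕ) :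
    Rsub K p n (n * (p - 1)) = Submodule.span K {monomial (topExponent p n) 1} := by
  refine congrArg (Submodule.span K) (Set.ext fun q ↦ ⟨?_, ?_⟩)
  · rintro ⟨k, hk, hsum, rfl⟩
    have heq : ∀ i ∈ Finset.univ, k i = p - 1 :=
      (Finset.sum_eq_sum_iff_of_le fun i _ ↦ hk i).1 (by simpa using hsum)
    have hktop : k = topExponent p n := Finsupp.ext fun i ↦ heq i (Finset.mem_univ i)
    rw [hktop, Set.mem_singleton_iff]
  · rintro rfl
    exact ⟨topExponent p n, by simp, by simp, rfl⟩

theorem Rsub_le_restrictDegree (p n ℓ : ℕ) :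
    Rsub K p n ℓ ≤ restrictDegree (Fin n) K (p - 1) := by
  refine Submodule.span_le.2 ?_
  rintro _ ⟨k, hk, -, rfl⟩
  simpa [mem_restrictDegree] using hk

theorem WR_degree_topExponent (W : Type*) [AddCommGroup W] [Module K W] (p n : ℕ) :
    WR K W p n (topExponent p n).degree =
      LinearMap.range ((TensorProduct.mk K W _).flip (monomial (topExponent p n) 1)) := by
  rw [WR, degree_topExponent, Rsub_top, range_lTensor_subtype_span_singleton]

instance finiteDimensional_WR (W : Type*) [AddCommGroup W] [Module K W] [FiniteDimensional K W]
    (p n ℓ : ℕ) : FiniteDimensional K (WR K W p n ℓ) :=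
  have := Submodule.finiteDimensional_of_le (Rsub_le_restrictDegree K p n ℓ)
  LinearMap.finiteDimensional_range _

end TruncatedPolynomials

theorem stmt2_general {K σ W : Type*} [Field K] [AddCommGroup W] [Module K W]
    {d : σ →₀ ℕ} (hd : ∀ i, ((d i)! : K) ≠ 0)
    {F : ℕ → Submodule K (W ⊗[K] MvPolynomial σ K)}
    (htop : F d.degree ≤ LinearMap.range ((TensorProduct.mk K W _).flip (monomial d 1)))
    (hF : ∀ ℓ < d.degree, ∀ i,
      (F (ℓ + 1)).map (LinearMap.lTensor W (pderiv i).toLinearMap) ≤ F ℓ) :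
    (d.prod fun _ a ↦ a + 1 : ℕ) * Module.rank K (F d.degree) ≤
      ∑ ℓ ∈ Finset.range (d.degree + 1), Module.rank K (F ℓ) := by
  classical
  let B := Module.Basis.ofVectorSpace K (F d.degree)
  choose w hw using fun j ↦ htop (B j).2
  have hw_indep : LinearIndependent K w := by
    have hB := B.linearIndependent.map' (F d.degree).subtype (Submodule.ker_subtype _)
    refine .of_comp ((TensorProduct.mk K W (MvPolynomial σ K)).flip (monomial d 1)) ?_
    exact (funext hw : _ ∘ w = _ ∘ B) ▸ hB
  have hmem (ℓ : ℕ) (j) : ∀ k ∈ {k ∈ Finset.Iic d | k.degree = ℓ},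
      w j ⊗ₜ[K] basisMonomials σ K k ∈ F ℓ := by
    intro k hk
    obtain ⟨hkd, rfl⟩ := Finset.mem_filter.1 hk
    rw [coe_basisMonomials]
    refine tmul_monomial_mem_of_le (fun i ↦ (hd i).isUnit) hF ?_ (Finset.mem_Iic.1 hkd)
    simpa only [← hw j, LinearMap.flip_apply, mk_apply] using (B j).2
  rw [prod_add_one_eq_sum_card_degree, ← B.mk_eq_rank'', Nat.cast_sum, Finset.sum_mul]
  exact Finset.sum_le_sum fun ℓ _ ↦
    card_mul_mk_le_rank_of_tmul_mem hw_indep (basisMonomials σ K).linearIndependent _ (hmem ℓ)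

theorem stmt2 (p : ℕ) (hp : p.Prime) (n : ℕ) (hn : 1 ≤ n)
    (K : Type*) [Field K] [CharP K p]
    (W : Type*) [AddCommGroup W] [Module K W] [FiniteDimensional K W]
    (F : ℕ → Submodule K (W ⊗[K] MvPolynomial (Fin n) K))
    (hF : ∀ ℓ ≤ n * (p - 1), F ℓ ≤ WR K W p n ℓ)
    (hD : ∀ ℓ, 1 ≤ ℓ → ℓ ≤ n * (p - 1) → ∀ i : Fin n,
      Submodule.map (LinearMap.lTensor W (pderiv i).toLinearMap) (F ℓ) ≤ F (ℓ - 1)) :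
    p ^ n * Module.finrank K (F (n * (p - 1)))
      ≤ ∑ ℓ ∈ Finset.range (n * (p - 1) + 1), Module.finrank K (F ℓ) := by
  rw [← degree_topExponent] at hF hD ⊢
  rw [← prod_topExponent_add_one hp.pos, ← natCast_mul_rank_le_sum_rank_iff
    (fun ℓ hℓ ↦ Submodule.finiteDimensional_of_le (hF ℓ (Finset.mem_range_succ_iff.1 hℓ)))
    (Finset.self_mem_range_succ _)]
  exact stmt2_general (topExponent_factorial_ne_zero K hp)
    ((hF _ le_rfl).trans_eq (WR_degree_topExponent K W p n))
    fun ℓ hℓ ↦ hD (ℓ + 1) ℓ.succ_pos hℓ
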